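/- arXiv:2501.09599 — 2 statements merged into one kernel-verified Lean document; each statement's English description precedes it below -/
import Mathlib

section
/- Let μ be an affinely irreducible self-similar measure on ℝ^d. Then there exists α > 0 such that for all β > α, the set of x ∈ ℝ^d for which max_{1≤i≤d} |x_i − p_i/q| ≤ q^{−(d+1)/d}(log q)^{−β} holds for infinitely many pairs (p,q) ∈ ℤ^d × ℕ with q ≥ 2 has μ-measure zero. -/
noncomputable section
open MeasureTheory Metric Filter Topology

variable {E : Type*} [NormedAddCommGroup E] [NormedSpace ℝ E]

/-- `f` is a contraction with ratio `r ∈ (0,1)`. -/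
def IsContractionWith (r : ℝ) (f : E → E) : Prop :=
  0 < r ∧ r < 1 ∧ ∀ x y, ‖f x - f y‖ ≤ r * ‖x - y‖

/-- `f` is a contracting similarity with ratio `r ∈ (0,1)`. -/
def IsSimilarityWith (r : ℝ) (f : E → E) : Prop :=
  0 < r ∧ r < 1 ∧ ∀ x y, ‖f x - f y‖ = r * ‖x - y‖

/-- A self-conformal IFS. -/
def IsSelfConformalIFS {A : Type*} [Fintype A] (φ : A → E → E) : Prop :=
  2 ≤ Fintype.card A ∧
  (∀ a, ∃ r, IsContractionWith r (φ a)) ∧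
  (∀ a, ContDiff ℝ 1 (φ a)) ∧
  (∀ a x, 0 < ‖fderiv ℝ (φ a) x‖ ∧ ∀ v, ‖fderiv ℝ (φ a) x v‖ = ‖fderiv ℝ (φ a) x‖ * ‖v‖) ∧
  (∃ H α₀ : ℝ, 0 < H ∧ 0 < α₀ ∧ ∀ a x y,
    |‖fderiv ℝ (φ a) x‖ - ‖fderiv ℝ (φ a) y‖| ≤ H * ‖x - y‖ ^ α₀) ∧
  (∃ a₁ a₂ x₁ x₂, φ a₁ x₁ = x₁ ∧ φ a₂ x₂ = x₂ ∧ x₁ ≠ x₂)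

/-- A self-similar IFS. -/
def IsSelfSimilarIFS {A : Type*} [Fintype A] (φ : A → E → E) : Prop :=
  2 ≤ Fintype.card A ∧
  (∀ a, ∃ r, IsSimilarityWith r (φ a)) ∧
  (∃ a₁ a₂ x₁ x₂, φ a₁ x₁ = x₁ ∧ φ a₂ x₂ = x₂ ∧ x₁ ≠ x₂)

/-- The IFS is affinely irreducible: no (nonempty) proper affine subspace is preserved. -/
def AffinelyIrreducible {A : Type*} (φ : A → E → E) : Prop :=
  ¬ ∃ W : AffineSubspace ℝ E, (W : Set E).Nonempty ∧ W ≠ ⊤ ∧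
      ∀ a, φ a '' (W : Set E) ⊆ (W : Set E)

/-- Closed `ε`-neighbourhood of an affine subspace. -/
def affNbhd (W : AffineSubspace ℝ E) (ε : ℝ) : Set E :=
  {y | Metric.infDist y (W : Set E) ≤ ε}

/-- topological support of a measure -/
def msupport [MeasurableSpace E] (μ : Measure E) : Set E :=
  {x | ∀ r : ℝ, 0 < r → 0 < μ (Metric.ball x r)}

/-- distance between two sets -/
def setDist (S T : Set E) : ℝ := sInf (Set.image2 dist S T)

/-- map corresponding to a finite word (as a list) -/
def listMap {A : Type*} (φ : A → E → E) : List A → E → E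
  | [] => id
  | a :: l => φ a ∘ listMap φ l

/-- map corresponding to the first `n` letters of an infinite word -/
def wordMap {A : Type*} (φ : A → E → E) : ℕ → (ℕ → A) → E → E
  | 0, _ => id
  | n + 1, a => φ (a 0) ∘ wordMap φ n (fun k => a (k + 1))

/-- set of `Ψ`-well-approximable vectors in `ℝ^d` -/
def WApprox (d : ℕ) (Ψ : ℕ → ℝ) : Set (EuclideanSpace ℝ (Fin d)) :=
  {x | {pq : (Fin d → ℤ) × ℕ | 0 < pq.2 ∧
        ∀ i, |x i - (pq.1 i : ℝ) / (pq.2 : ℝ)| ≤ Ψ pq.2}.Infinite}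

/-- set of singular vectors in `ℝ^d` -/
def Sing (d : ℕ) : Set (EuclideanSpace ℝ (Fin d)) :=
  {x | ∀ c : ℝ, 0 < c → ∃ T : ℝ, 0 < T ∧ ∀ t : ℝ, T ≤ t →
    ∃ q : ℕ, 0 < q ∧ (q : ℝ) < t ∧
      ∀ i, |(q : ℝ) * x i - round ((q : ℝ) * x i)| ≤ c * t ^ (-(1 : ℝ) / (d : ℝ))}

section Helpers
open scoped Nat

/-- The simplex lemma: rationals of bounded height in a small box lie on one hyperplane. -/
lemma simplex_aux (d : ℕ) (c : Fin d → ℝ) (ρ Q : ℝ) (hρ : 0 < ρ)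
    (hQ : Q ^ (d + 1) * (d + 1)! * ρ ^ d < 1)
    (m : (Fin d ⊕ Unit) → (Fin d → ℤ) × ℕ)
    (hm : ∀ k, 0 < (m k).2 ∧ ((m k).2 : ℝ) ≤ Q ∧
      ∀ i, |((m k).1 i : ℝ) / ((m k).2 : ℝ) - c i| ≤ ρ) :
    Matrix.det (Matrix.of fun k : Fin d ⊕ Unit =>
      (Sum.elim (fun i => ((m k).1 i : ℝ)) (fun _ => ((m k).2 : ℝ)) : Fin d ⊕ Unit → ℝ)) = 0 := by
  set M := (Matrix.of fun k : Fin d ⊕ Unit =>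
      (Sum.elim (fun i => ((m k).1 i : ℝ)) (fun _ => ((m k).2 : ℝ)) : Fin d ⊕ Unit → ℝ)) with hM
  set N : Matrix (Fin d ⊕ Unit) (Fin d ⊕ Unit) ℝ := Matrix.of fun k =>
      (Sum.elim (fun i => (((m k).1 i : ℝ) / ((m k).2 : ℝ) - c i) / ρ) (fun _ => 1)) with hN
  set T : Matrix (Fin d ⊕ Unit) (Fin d ⊕ Unit) ℝ :=
    Matrix.fromBlocks (ρ • (1 : Matrix (Fin d) (Fin d) ℝ)) 0 (Matrix.of fun _ i => c i) 1 with hT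
  have hdetT : T.det = ρ ^ d := by
    rw [hT, Matrix.det_fromBlocks_zero₁₂]; simp
  have hfac : M = Matrix.diagonal (fun k => ((m k).2 : ℝ)) * (N * T) := by
    ext k j
    have hq : ((m k).2 : ℝ) ≠ 0 := by exact_mod_cast (hm k).1.ne'
    rw [Matrix.diagonal_mul, Matrix.mul_apply, Fintype.sum_sum_type]
    rcases j with j | j
    · simp [hM, hN, hT, Matrix.one_apply]
      field_simp
      ring
    · simp [hM, hN, hT]
  have hdet : M.det = (∏ k, ((m k).2 : ℝ)) * (N.det * ρ ^ d) := by
    rw [hfac, Matrix.det_mul, Matrix.det_mul, Matrix.det_diagonal, hdetT]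
  have hNdet : |N.det| ≤ (d + 1)! := by
    have := Matrix.det_le (A := N) (abv := (IsAbsoluteValue.toAbsoluteValue (abs : ℝ → ℝ))) (x := 1) (by
      intro k j
      rcases j with j | j
      · simp only [hN, Matrix.of_apply, Sum.elim_inl]
        change |_| ≤ _
        rw [abs_div, abs_of_pos hρ, div_le_one hρ]
        exact (hm k).2.2 j
      · simp [hN])
    change |N.det| ≤ _ at this
    simpa using this
  have hprod : |∏ k, ((m k).2 : ℝ)| ≤ Q ^ (d + 1) := by
    rw [Finset.abs_prod]
    calc ∏ k, |((m k).2 : ℝ)| ≤ ∏ _k : Fin d ⊕ Unit, Q := by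
          apply Finset.prod_le_prod
          · intros; positivity
          · intro k _; simpa using (hm k).2.1
      _ = _ := by simp
  have hlt : |M.det| < 1 := by
    rw [hdet, abs_mul, abs_mul, abs_of_pos (pow_pos hρ d)]
    have hQ0 : 0 ≤ Q ^ (d + 1) := (abs_nonneg _).trans hprod
    calc _ ≤ Q ^ (d + 1) * ((d + 1)! * ρ ^ d) := by gcongr
      _ < 1 := by rw [← mul_assoc]; exact hQ
  have hintdet : M.det = ((Matrix.det (Matrix.of fun k : Fin d ⊕ Unit =>
      (Sum.elim (fun i => (m k).1 i) (fun _ => ((m k).2 : ℤ)) : Fin d ⊕ Unit → ℤ)) : ℤ) : ℝ) := by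
    rw [Int.cast_det]
    congr 1
    ext k j
    rcases j with j | j <;> simp [hM]
  rw [hintdet] at hlt ⊢
  have : |Matrix.det (Matrix.of fun k : Fin d ⊕ Unit =>
      (Sum.elim (fun i => (m k).1 i) (fun _ => ((m k).2 : ℤ)) : Fin d ⊕ Unit → ℤ))| < 1 := by
    exact_mod_cast hlt
  rw [Int.abs_lt_one_iff.mp this]; simp

lemma simplex (d : ℕ) (hd : 0 < d) (c : Fin d → ℝ) (ρ Q : ℝ) (hρ : 0 < ρ)
    (hQ : Q ^ (d + 1) * (d + 1)! * ρ ^ d < 1)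
    (S : Set ((Fin d → ℤ) × ℕ))
    (hS : ∀ s ∈ S, 0 < s.2 ∧ (s.2 : ℝ) ≤ Q ∧ ∀ i, |(s.1 i : ℝ) / (s.2 : ℝ) - c i| ≤ ρ) :
    ∃ (v : EuclideanSpace ℝ (Fin d)) (t : ℝ), ‖v‖ = 1 ∧
      ∀ s ∈ S, ∑ i, v i * ((s.1 i : ℝ) / (s.2 : ℝ)) = t := by
  rcases S.eq_empty_or_nonempty with rfl | ⟨s0, hs0⟩
  · exact ⟨EuclideanSpace.single ⟨0, hd⟩ 1, 0, by simp, by simp⟩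
  set g : (Fin d → ℤ) × ℕ → (Fin d ⊕ Unit → ℝ) := fun s =>
    Sum.elim (fun i => (s.1 i : ℝ)) (fun _ => (s.2 : ℝ)) with hg
  have hne : Submodule.span ℝ (g '' S) < ⊤ := by
    rw [lt_top_iff_ne_top]
    intro htop
    set b := Module.Basis.ofSpan htop.ge
    have hsub : ∀ k, b k ∈ g '' S := fun k =>
      Module.Basis.ofSpan_subset htop.ge ⟨k, rfl⟩
    have e := b.indexEquiv (Pi.basisFun ℝ (Fin d ⊕ Unit))
    have hli : LinearIndependent ℝ (b ∘ e.symm) :=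
      b.linearIndependent.comp _ e.symm.injective
    choose m hmS hm using fun k => hsub (e.symm k)
    have h0 := simplex_aux d c ρ Q hρ hQ m (fun k => hS _ (hmS k))
    have : (b ∘ e.symm) = fun k => g (m k) := by
      ext1 k; exact (hm k).symm
    rw [this] at hli
    have h1 := (Matrix.linearIndependent_rows_iff_isUnit (A := Matrix.of fun k => g (m k))).mp hli
    rw [Matrix.isUnit_iff_isUnit_det] at h1
    exact h1.ne_zero h0
  obtain ⟨f, hf0, hf⟩ := Submodule.exists_le_ker_of_lt_top _ hne
  have hfx : ∀ s ∈ S, ∑ i, f (Pi.single (Sum.inl i) 1) * (s.1 i : ℝ)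
      + f (Pi.single (Sum.inr ()) 1) * (s.2 : ℝ) = 0 := by
    intro s hs
    have h1 : f (g s) = 0 := hf (Submodule.subset_span ⟨s, hs, rfl⟩)
    rw [LinearMap.pi_apply_eq_sum_univ f (g s), Fintype.sum_sum_type] at h1
    simp only [hg, Sum.elim_inl, Sum.elim_inr, smul_eq_mul, Finset.univ_unique, Finset.sum_singleton] at h1
    convert h1 using 2
    · apply Finset.sum_congr rfl
      intro i _
      rw [mul_comm]
      congr 2
      ext j; simp [Pi.single_apply, eq_comm]
    · rw [mul_comm]
      congr 2
      ext j; simp [Pi.single_apply, eq_comm]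
  set a : EuclideanSpace ℝ (Fin d) := WithLp.toLp 2 (fun i => f (Pi.single (Sum.inl i) 1)) with ha
  have ha0 : a ≠ 0 := by
    intro h
    have hi : ∀ i, f (Pi.single (Sum.inl i) 1) = 0 := fun i => by
      have := congrArg (fun z : EuclideanSpace ℝ (Fin d) => z i) h
      simpa [ha] using this
    have h1 := hfx s0 hs0
    have hq : (s0.2 : ℝ) ≠ 0 := by exact_mod_cast (hS s0 hs0).1.ne'
    simp only [hi, zero_mul, Finset.sum_const_zero, zero_add, mul_eq_zero, hq, or_false] at h1
    apply hf0
    apply LinearMap.pi_ext'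
    intro k
    ext
    rcases k with k | k
    · simpa using hi k
    · simpa using h1
  have hn : ‖a‖ ≠ 0 := norm_ne_zero_iff.mpr ha0
  refine ⟨‖a‖⁻¹ • a, -‖a‖⁻¹ * f (Pi.single (Sum.inr ()) 1), by simp [norm_smul, hn], ?_⟩
  intro s hs
  have hq : (s.2 : ℝ) ≠ 0 := by exact_mod_cast (hS s hs).1.ne'
  have h1 := hfx s hs
  have h2 : ∑ i, (‖a‖⁻¹ • a) i * ((s.1 i : ℝ) / (s.2 : ℝ))
      = ‖a‖⁻¹ / s.2 * ∑ i, f (Pi.single (Sum.inl i) 1) * (s.1 i : ℝ) := by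
    rw [Finset.mul_sum]
    apply Finset.sum_congr rfl
    intro i _
    simp [ha]
    ring
  rw [h2, eq_neg_of_add_eq_zero_left h1]
  field_simp

end Helpers

/-- Pulling back an affine functional with unit gradient under a similarity. -/
lemma sim_pullback {d : ℕ} (f : EuclideanSpace ℝ (Fin d) → EuclideanSpace ℝ (Fin d)) (r : ℝ)
    (hr : 0 < r) (hf : ∀ x y, ‖f x - f y‖ = r * ‖x - y‖)
    (v : EuclideanSpace ℝ (Fin d)) (t : ℝ) (hv : ‖v‖ = 1) :
    ∃ (v' : EuclideanSpace ℝ (Fin d)) (t' : ℝ), ‖v'‖ = 1 ∧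
      ∀ x, inner ℝ v (f x) - t = r * (inner ℝ v' x - t') := by
  have hi : Isometry (fun x => r⁻¹ • f x) := by
    apply Isometry.of_dist_eq
    intro x y
    rw [dist_eq_norm, dist_eq_norm, ← smul_sub, norm_smul, hf, Real.norm_eq_abs,
      abs_of_pos (inv_pos.mpr hr)]
    field_simp
  let T := hi.affineIsometryOfStrictConvexSpace
  let L := T.linearIsometry.toLinearIsometryEquiv rfl
  have hT : ∀ x, f x = r • (L x + r⁻¹ • f 0) := by
    intro x
    have h1 : T x = T.linearIsometry (x - 0) + T 0 := by
      have := T.map_vadd 0 (x - 0)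
      simpa using this
    have h2 : r⁻¹ • f x = L x + r⁻¹ • f 0 := by
      have h3 : r⁻¹ • f x = L (x - 0) + r⁻¹ • f 0 := h1
      rwa [sub_zero] at h3
    rw [← h2, smul_smul, mul_inv_cancel₀ hr.ne', one_smul]
  refine ⟨L.symm v, t / r - inner ℝ v (r⁻¹ • f 0), by simpa using hv, ?_⟩
  intro x
  have h3 : inner ℝ (L.symm v) x = inner ℝ v (L x) := by
    rw [← L.inner_map_map, L.apply_symm_apply]
  rw [h3, hT x, inner_smul_right, inner_add_right]
  field_simp
  ring

section Words
variable {d : ℕ} {A : Type*}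
  {φ : A → EuclideanSpace ℝ (Fin d) → EuclideanSpace ℝ (Fin d)} {r : A → ℝ}

lemma listMap_append (u w : List A) (x : EuclideanSpace ℝ (Fin d)) :
    listMap φ (u ++ w) x = listMap φ u (listMap φ w x) := by
  induction u with
  | nil => rfl
  | cons a u ih => simp [listMap, ih]

lemma listMap_norm (hr : ∀ a, IsSimilarityWith (r a) (φ a)) (w : List A)
    (x y : EuclideanSpace ℝ (Fin d)) :
    ‖listMap φ w x - listMap φ w y‖ = (w.map r).prod * ‖x - y‖ := by
  induction w with
  | nil => simp [listMap]
  | cons a w ih => simp [listMap, (hr a).2.2, ih, mul_assoc]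

lemma ratio_pos (hr : ∀ a, IsSimilarityWith (r a) (φ a)) (w : List A) :
    0 < (w.map r).prod := by
  induction w with
  | nil => simp
  | cons a w ih => simpa using mul_pos (hr a).1 ih

/-- The list maps preserve an invariant ball. -/
lemma listMap_ball {R : ℝ} (hR : ∀ a x, ‖x‖ ≤ R → ‖φ a x‖ ≤ R) (w : List A)
    (x : EuclideanSpace ℝ (Fin d)) (hx : ‖x‖ ≤ R) : ‖listMap φ w x‖ ≤ R := by
  induction w with
  | nil => simpa [listMap]
  | cons a w ih => exact hR a _ ih

lemma sim_continuous (hr : ∀ a, IsSimilarityWith (r a) (φ a)) (a : A) : Continuous (φ a) := by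
  have : LipschitzWith ⟨r a, (hr a).1.le⟩ (φ a) := by
    apply LipschitzWith.of_dist_le_mul
    intro x y
    rw [dist_eq_norm, dist_eq_norm, (hr a).2.2]
    rfl
  exact this.continuous

lemma listMap_continuous (hr : ∀ a, IsSimilarityWith (r a) (φ a)) (w : List A) :
    Continuous (listMap φ w) := by
  induction w with
  | nil => exact continuous_id
  | cons a w ih => exact (sim_continuous hr a).comp ih

/-- Irreducibility: some orbit point avoids a given hyperplane. -/
lemma exists_off (hr : ∀ a, IsSimilarityWith (r a) (φ a)) (hirr : AffinelyIrreducible φ)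
    (z v : EuclideanSpace ℝ (Fin d)) (t : ℝ) (hv : ‖v‖ = 1) :
    ∃ w : List A, inner ℝ v (listMap φ w z) ≠ t := by
  by_contra! hcon
  apply hirr
  choose v' t' hv' h' using fun w : List A =>
    sim_pullback (listMap φ w) (w.map r).prod (ratio_pos hr w) (listMap_norm hr w) v t hv
  have hiff : ∀ w x, inner ℝ v (listMap φ w x) = t ↔ inner ℝ (v' w) x = t' w := by
    intro w x
    rw [← sub_eq_zero, h' w x, mul_eq_zero, sub_eq_zero]
    simp [(ratio_pos hr w).ne']
  refine ⟨{ carrier := {x | ∀ w, inner ℝ v (listMap φ w x) = t}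
            smul_vsub_vadd_mem' := ?_ }, ⟨z, hcon⟩, ?_, ?_⟩
  · intro c p1 p2 p3 h1 h2 h3 w
    rw [hiff]
    have e1 := (hiff w _).1 (h1 w)
    have e2 := (hiff w _).1 (h2 w)
    have e3 := (hiff w _).1 (h3 w)
    simp only [vsub_eq_sub, vadd_eq_add, inner_add_right, inner_smul_right, inner_sub_right,
      e1, e2, e3]
    ring
  · intro h
    have hmem : ((t + 1) • v) ∈ (⊤ : AffineSubspace ℝ (EuclideanSpace ℝ (Fin d))) := trivial
    rw [← h] at hmem
    have := hmem []
    simp [listMap, inner_smul_right, hv] at this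
  · rintro a _ ⟨x, hx, rfl⟩ w
    have := hx (w ++ [a])
    rwa [listMap_append] at this

lemma listMap_replicate_fix (a : A) (z : EuclideanSpace ℝ (Fin d)) (hz : φ a z = z) (m : ℕ) :
    listMap φ (List.replicate m a) z = z := by
  induction m with
  | zero => rfl
  | succ m ih => simp [List.replicate_succ, listMap, ih, hz]

lemma exists_words (hr : ∀ a, IsSimilarityWith (r a) (φ a)) (hirr : AffinelyIrreducible φ)
    (R : ℝ) (hR1 : 1 ≤ R)
    (a₀ : A) (z : EuclideanSpace ℝ (Fin d)) (hz : φ a₀ z = z) (hzR : ‖z‖ ≤ R) :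
    ∃ (F : Finset (List A)) (δ : ℝ), 0 < δ ∧
      ∀ (v : EuclideanSpace ℝ (Fin d)) (t : ℝ), ‖v‖ = 1 →
        ∃ w ∈ F, ∀ x, ‖x‖ ≤ R → δ < |inner ℝ v (listMap φ w x) - t| := by
  classical
  set K : Set (EuclideanSpace ℝ (Fin d) × ℝ) :=
    Metric.sphere 0 1 ×ˢ Set.Icc (-(R + 1)) (R + 1) with hK
  have hKc : IsCompact K := (isCompact_sphere _ _).prod isCompact_Icc
  let U : List A → Set (EuclideanSpace ℝ (Fin d) × ℝ) := fun w =>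
    {q | 3 * R * (w.map r).prod < |inner ℝ q.1 (listMap φ w z) - q.2|}
  have hUo : ∀ w, IsOpen (U w) := fun w => by
    apply isOpen_lt <;> fun_prop
  have hcov : K ⊆ ⋃ w, U w := by
    rintro ⟨v, t⟩ ⟨hv, -⟩
    have hv1 : ‖v‖ = 1 := by simpa using hv
    obtain ⟨w, hw⟩ := exists_off hr hirr z v t hv1
    have hpos : 0 < |inner ℝ v (listMap φ w z) - t| := abs_pos.mpr (sub_ne_zero.mpr hw)
    have hlim : Tendsto (fun m : ℕ => 3 * R * ((w.map r).prod * r a₀ ^ m)) atTop (𝓝 0) := by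
      have := tendsto_pow_atTop_nhds_zero_of_lt_one (hr a₀).1.le (hr a₀).2.1
      simpa using (this.const_mul (w.map r).prod).const_mul (3 * R)
    obtain ⟨m, hm⟩ := (hlim.eventually_lt_const hpos).exists
    refine Set.mem_iUnion.mpr ⟨w ++ List.replicate m a₀, ?_⟩
    simp only [U, Set.mem_ofPred_eq, listMap_append, listMap_replicate_fix a₀ z hz]
    simpa using hm
  obtain ⟨F, hF⟩ := hKc.elim_finite_subcover U hUo hcov
  obtain ⟨w₀, hw₀, hmin⟩ := Finset.exists_min_image (insert [] F) (fun w => (w.map r).prod)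
    ⟨[], Finset.mem_insert_self _ _⟩
  refine ⟨insert [] F, (w₀.map r).prod, ratio_pos hr w₀, ?_⟩
  intro v t hv
  by_cases ht : |t| ≤ R + 1
  · have : (v, t) ∈ K := ⟨by simpa using hv, abs_le.mp ht⟩
    obtain ⟨w, hwF, hw⟩ := Set.mem_iUnion₂.mp (hF this)
    refine ⟨w, Finset.mem_insert_of_mem hwF, fun x hx => ?_⟩
    have h1 := hmin w (Finset.mem_insert_of_mem hwF)
    have h2 : 3 * R * (w.map r).prod < |inner ℝ v (listMap φ w z) - t| := hw
    have h3 : |inner ℝ v (listMap φ w z - listMap φ w x)| ≤ (w.map r).prod * (2 * R) := by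
      refine (abs_real_inner_le_norm _ _).trans ?_
      rw [hv, one_mul, listMap_norm hr]
      have := ratio_pos hr w
      gcongr
      exact (norm_sub_le _ _).trans (by linarith)
    rw [inner_sub_right] at h3
    have h4 : |inner ℝ v (listMap φ w z) - t| ≤
      |inner ℝ v (listMap φ w z) - inner ℝ v (listMap φ w x)| +
        |inner ℝ v (listMap φ w x) - t| := abs_sub_le _ _ _
    have := ratio_pos hr w
    nlinarith
  · refine ⟨[], Finset.mem_insert_self _ _, fun x hx => ?_⟩
    have h1 := hmin [] (Finset.mem_insert_self _ _)
    simp only [List.map_nil, List.prod_nil] at h1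
    have h2 : |inner ℝ v x| ≤ R := by
      refine (abs_real_inner_le_norm _ _).trans ?_
      rw [hv, one_mul]; exact hx
    have h3 : |t| - |inner ℝ v x| ≤ |inner ℝ v x - t| := by
      rw [abs_sub_comm]; exact abs_sub_abs_le_abs_sub _ _
    simp only [listMap, id]
    push Not at ht
    linarith

end Words

section Meas
variable {d : ℕ} {A : Type*} [Fintype A]
  {φ : A → EuclideanSpace ℝ (Fin d) → EuclideanSpace ℝ (Fin d)} {r : A → ℝ}
  {p : A → ℝ} {μ : Measure (EuclideanSpace ℝ (Fin d))} [IsProbabilityMeasure μ]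

lemma stat_apply (hr : ∀ a, IsSimilarityWith (r a) (φ a)) (hp : ∀ a, 0 < p a)
    (hstat : μ = ∑ a, ENNReal.ofReal (p a) • Measure.map (φ a) μ)
    (S : Set (EuclideanSpace ℝ (Fin d))) (hS : MeasurableSet S) :
    μ.real S = ∑ a, p a * μ.real (φ a ⁻¹' S) := by
  have h1 : μ S = ∑ a, ENNReal.ofReal (p a) * μ (φ a ⁻¹' S) := by
    conv_lhs => rw [hstat]
    rw [Measure.finsetSum_apply]
    apply Finset.sum_congr rfl
    intro a _
    rw [Measure.smul_apply, Measure.map_apply (sim_continuous hr a).measurable hS, smul_eq_mul]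
  rw [Measure.real, h1, ENNReal.toReal_sum]
  · apply Finset.sum_congr rfl
    intro a _
    rw [ENNReal.toReal_mul, ENNReal.toReal_ofReal (hp a).le]; rfl
  · intro a _
    exact ENNReal.mul_ne_top ENNReal.ofReal_ne_top (measure_ne_top _ _)

lemma exists_radius (hr : ∀ a, IsSimilarityWith (r a) (φ a)) (hp : ∀ a, 0 < p a)
    (hp1 : ∑ a, p a = 1)
    (hstat : μ = ∑ a, ENNReal.ofReal (p a) • Measure.map (φ a) μ) (R₀ : ℝ) :
    ∃ R, R₀ ≤ R ∧ 1 ≤ R ∧ (∀ a x, ‖x‖ ≤ R → ‖φ a x‖ ≤ R) ∧ μ.real {x | R < ‖x‖} = 0 := by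
  have hA : Nonempty A := by
    by_contra h
    rw [not_nonempty_iff] at h
    simp at hp1
  set R₁ : ℝ := |R₀| + ∑ a, ‖φ a 0‖ / (1 - r a) with hR₁
  have h1r : ∀ a, 0 < 1 - r a := fun a => by linarith [(hr a).2.1]
  have hnn : ∀ a ∈ Finset.univ, 0 ≤ ‖φ a 0‖ / (1 - r a) := fun a _ =>
    div_nonneg (norm_nonneg _) (h1r a).le
  have hR₁0 : 0 ≤ R₁ := add_nonneg (abs_nonneg _) (Finset.sum_nonneg hnn)
  have hR₁R₀ : R₀ ≤ R₁ := (le_abs_self _).trans (le_add_of_nonneg_right (Finset.sum_nonneg hnn))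
  have hφ0 : ∀ a, ‖φ a 0‖ ≤ (1 - r a) * R₁ := by
    intro a
    have h2 : ‖φ a 0‖ / (1 - r a) ≤ R₁ :=
      (Finset.single_le_sum hnn (Finset.mem_univ a)).trans
        (le_add_of_nonneg_left (abs_nonneg _))
    rw [div_le_iff₀ (h1r a)] at h2
    linarith
  have hφ : ∀ a x, ‖φ a x‖ ≤ (1 - r a) * R₁ + r a * ‖x‖ := by
    intro a x
    have h2 := (hr a).2.2 x 0
    rw [sub_zero] at h2
    have h3 : ‖φ a x‖ ≤ ‖φ a x - φ a 0‖ + ‖φ a 0‖ := by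
      simpa using norm_add_le (φ a x - φ a 0) (φ a 0)
    linarith [hφ0 a]
  obtain ⟨a₁, ha₁⟩ := Finite.exists_max r
  have hρ0 := (hr a₁).1
  have hρ1 := (hr a₁).2.1
  set g : ℝ → ℝ := fun s => μ.real {x | R₁ + s < ‖x‖} with hg
  have hmeas : ∀ s, MeasurableSet {x : EuclideanSpace ℝ (Fin d) | s < ‖x‖} := fun s =>
    (isOpen_lt continuous_const continuous_norm).measurableSet
  have hstep : ∀ s, 0 ≤ s → g s ≤ g (s / r a₁) := by
    intro s hs
    simp only [hg]
    rw [stat_apply hr hp hstat _ (hmeas _)]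
    calc _ ≤ ∑ a, p a * μ.real {x | R₁ + s / r a₁ < ‖x‖} := by
          apply Finset.sum_le_sum
          intro a _
          apply mul_le_mul_of_nonneg_left _ (hp a).le
          refine measureReal_mono ?_ (measure_ne_top _ _)
          intro x hx
          have hx' : R₁ + s < ‖φ a x‖ := hx
          have h2 := hφ a x
          have h3 : r a * R₁ + s < r a * ‖x‖ := by linarith
          have h4 : s / r a₁ ≤ s / r a := div_le_div_of_nonneg_left hs (hr a).1 (ha₁ a)
          have h5 : R₁ + s / r a < ‖x‖ := by
            have := (hr a).1
            rw [← mul_lt_mul_iff_of_pos_left this]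
            calc r a * (R₁ + s / r a) = r a * R₁ + s := by field_simp
              _ < _ := h3
          show R₁ + s / r a₁ < ‖x‖
          linarith
      _ = _ := by rw [← Finset.sum_mul, hp1, one_mul]
  have hiter : ∀ n : ℕ, g 1 ≤ g (1 / r a₁ ^ n) := by
    intro n
    induction n with
    | zero => simp
    | succ n ih =>
      refine ih.trans ((hstep _ (by positivity)).trans_eq ?_)
      rw [pow_succ, div_div]
  have hlim : Tendsto (fun n : ℕ => g (1 / r a₁ ^ n)) atTop (𝓝 0) := by
    have h1 : Tendsto (fun n : ℕ => 1 / r a₁ ^ n) atTop atTop := by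
      have := tendsto_pow_atTop_atTop_of_one_lt (one_lt_inv₀ hρ0 |>.mpr hρ1)
      simpa using this
    have h2 : Tendsto (fun s : ℝ => μ {x : EuclideanSpace ℝ (Fin d) | R₁ + s < ‖x‖}) atTop (𝓝 0) := by
      have := tendsto_measure_iInter_atTop (μ := μ)
        (s := fun s : ℝ => {x : EuclideanSpace ℝ (Fin d) | R₁ + s < ‖x‖})
        (fun s => (hmeas _).nullMeasurableSet)
        (fun s t hst x hx => by
          have hx' : R₁ + t < ‖x‖ := hx
          show R₁ + s < ‖x‖
          linarith) ⟨0, measure_ne_top _ _⟩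
      have hempty : (⋂ s : ℝ, {x : EuclideanSpace ℝ (Fin d) | R₁ + s < ‖x‖}) = ∅ := by
        rw [Set.eq_empty_iff_forall_notMem]
        intro x hx
        have := Set.mem_iInter.mp hx (‖x‖ - R₁)
        have h' : R₁ + (‖x‖ - R₁) < ‖x‖ := this
        linarith
      rw [hempty, measure_empty] at this
      exact this
    have h3 := (ENNReal.tendsto_toReal ENNReal.zero_ne_top).comp (h2.comp h1)
    rw [ENNReal.toReal_zero] at h3
    exact h3
  have hg1 : g 1 = 0 := le_antisymm (ge_of_tendsto' hlim hiter) measureReal_nonneg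
  refine ⟨R₁ + 1, by linarith, by linarith, ?_, hg1⟩
  intro a x hx
  have h2 := hφ a x
  have h3 := (hr a).1
  have h4 := h1r a
  nlinarith

/-- Slabs. -/
def slab (v : EuclideanSpace ℝ (Fin d)) (t ε : ℝ) : Set (EuclideanSpace ℝ (Fin d)) :=
  {x | |inner ℝ v x - t| ≤ ε}

lemma word_decay (hr : ∀ a, IsSimilarityWith (r a) (φ a)) (hp : ∀ a, 0 < p a)
    (hp1 : ∑ a, p a = 1)
    (hstat : μ = ∑ a, ENNReal.ofReal (p a) • Measure.map (φ a) μ)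
    (R : ℝ) (hR : μ.real {x | R < ‖x‖} = 0)
    (rm : ℝ) (hrm0 : 0 < rm) (hrm1 : rm ≤ 1) (hrm : ∀ a, rm ≤ r a) (M : ℝ) (hM : 0 ≤ M)
    (w : List A) : ∀ (v : EuclideanSpace ℝ (Fin d)) (t ε : ℝ), ‖v‖ = 1 → 0 < ε →
      (∀ v' t' ε', ‖v'‖ = 1 → 0 < ε' → ε' ≤ ε / rm ^ w.length → μ.real (slab v' t' ε') ≤ M) →
      (∀ x, ‖x‖ ≤ R → ε < |inner ℝ v (listMap φ w x) - t|) →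
      μ.real (slab v t ε) ≤ (1 - (w.map p).prod) * M := by
  classical
  induction w with
  | nil =>
    intro v t ε hv hε _ h
    have : μ.real (slab v t ε) = 0 := by
      apply measureReal_mono_null _ hR
      intro x hx
      show R < ‖x‖
      by_contra! hcon
      exact absurd hx (not_le.mpr (h x hcon))
    simp [this]
  | cons a w ih =>
    intro v t ε hv hε hb h
    have hmeas : MeasurableSet (slab v t ε) := by
      apply IsClosed.measurableSet
      apply isClosed_le <;> fun_prop
    choose v' t' hv' h' using fun b =>
      sim_pullback (φ b) (r b) (hr b).1 (hr b).2.2 v t hv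
    have hpre : ∀ b, φ b ⁻¹' (slab v t ε) = slab (v' b) (t' b) (ε / r b) := by
      intro b
      ext x
      show |inner ℝ v (φ b x) - t| ≤ ε ↔ |inner ℝ (v' b) x - t' b| ≤ ε / r b
      rw [h' b x, abs_mul, abs_of_pos (hr b).1, le_div_iff₀ (hr b).1, mul_comm]
    rw [stat_apply hr hp hstat _ hmeas]
    have hgen : ∀ b, μ.real (slab (v' b) (t' b) (ε / r b)) ≤ M := by
      intro b
      apply hb _ _ _ (hv' b) (div_pos hε (hr b).1)
      apply div_le_div_of_nonneg_left hε.le (by positivity)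
      refine le_trans ?_ (hrm b)
      simpa using pow_le_pow_of_le_one hrm0.le hrm1 (show 1 ≤ (a :: w).length by simp)
    have ha : μ.real (slab (v' a) (t' a) (ε / r a)) ≤ (1 - (w.map p).prod) * M := by
      apply ih _ _ _ (hv' a) (div_pos hε (hr a).1)
      · intro v₁ t₁ ε₁ hv₁ hε₁ hle
        apply hb v₁ t₁ ε₁ hv₁ hε₁ (hle.trans _)
        rw [div_div]
        apply div_le_div_of_nonneg_left hε.le (by positivity)
        rw [List.length_cons, pow_succ, mul_comm]
        gcongr
        exact hrm a
      · intro x hx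
        have h1 := h x hx
        simp only [listMap, Function.comp] at h1
        rw [h' a, abs_mul, abs_of_pos (hr a).1] at h1
        rw [div_lt_iff₀ (hr a).1]
        linarith
    calc ∑ b, p b * μ.real (φ b ⁻¹' slab v t ε)
        ≤ ∑ b, (p b * M - if b = a then p a * (w.map p).prod * M else 0) := by
          apply Finset.sum_le_sum
          intro b _
          rw [hpre b]
          split_ifs with hba
          · subst hba
            have := mul_le_mul_of_nonneg_left ha (hp b).le
            linarith
          · rw [sub_zero]
            exact mul_le_mul_of_nonneg_left (hgen b) (hp b).le
      _ = _ := by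
          rw [Finset.sum_sub_distrib, ← Finset.sum_mul, hp1, Finset.sum_ite_eq']
          simp
          ring

lemma decay (hr : ∀ a, IsSimilarityWith (r a) (φ a)) (hp : ∀ a, 0 < p a)
    (hp1 : ∑ a, p a = 1)
    (hstat : μ = ∑ a, ENNReal.ofReal (p a) • Measure.map (φ a) μ)
    (R : ℝ) (hR : μ.real {x | R < ‖x‖} = 0)
    (rm : ℝ) (hrm0 : 0 < rm) (hrm1 : rm < 1) (hrm : ∀ a, rm ≤ r a)
    (F : Finset (List A)) (δ : ℝ) (hδ : 0 < δ)
    (hF : ∀ (v : EuclideanSpace ℝ (Fin d)) (t : ℝ), ‖v‖ = 1 →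
        ∃ w ∈ F, ∀ x, ‖x‖ ≤ R → δ < |inner ℝ v (listMap φ w x) - t|) :
    ∃ C α : ℝ, 0 < C ∧ 0 < α ∧ ∀ (v : EuclideanSpace ℝ (Fin d)) (t ε : ℝ), ‖v‖ = 1 → 0 < ε →
      μ.real (slab v t ε) ≤ C * ε ^ α := by
  obtain ⟨N, hN⟩ : ∃ N : ℕ, ∀ w ∈ F, w.length ≤ N :=
    ⟨F.sup List.length, fun w hw => Finset.le_sup (f := List.length) hw⟩
  have hpw : ∀ w : List A, 0 < (w.map p).prod := by
    intro w
    induction w with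
    | nil => simp
    | cons a w ih => simpa using mul_pos (hp a) ih
  obtain ⟨c, hc0, hc1, hc⟩ : ∃ c : ℝ, 0 < c ∧ c < 1 ∧ ∀ w ∈ F, 1 - (w.map p).prod ≤ c := by
    rcases F.eq_empty_or_nonempty with hF0 | hFne
    · exact ⟨1 / 2, by norm_num, by norm_num, by simp [hF0]⟩
    · obtain ⟨w₀, -, hmin⟩ := Finset.exists_min_image F (fun w => (w.map p).prod) hFne
      refine ⟨max (1 - (w₀.map p).prod) (1 / 2), by simp, max_lt (by linarith [hpw w₀]) (by norm_num), ?_⟩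
      intro w hw
      exact le_max_of_le_left (by linarith [hmin w hw])
  set θ := rm ^ (N + 1) with hθ
  have hθ0 : 0 < θ := by positivity
  have hθ1 : θ < 1 := pow_lt_one₀ hrm0.le hrm1 (by omega)
  have hind : ∀ (k : ℕ) (v : EuclideanSpace ℝ (Fin d)) (t ε : ℝ), ‖v‖ = 1 → 0 < ε →
      ε ≤ δ * θ ^ k → μ.real (slab v t ε) ≤ c ^ k := by
    intro k
    induction k with
    | zero => intro v t ε _ _ _; simpa using measureReal_le_one
    | succ k ih =>
      intro v t ε hv hε hle
      obtain ⟨w, hwF, hw⟩ := hF v t hv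
      have h1 : θ ^ (k + 1) ≤ 1 := pow_le_one₀ hθ0.le hθ1.le
      have hεδ : ε ≤ δ := hle.trans (by nlinarith)
      have := word_decay hr hp hp1 hstat R hR rm hrm0 hrm1.le hrm (c ^ k) (by positivity) w
        v t ε hv hε (by
          intro v' t' ε' hv' hε' hle'
          apply ih v' t' ε' hv' hε' (hle'.trans _)
          rw [div_le_iff₀ (by positivity)]
          refine hle.trans ?_
          rw [pow_succ, ← mul_assoc]
          gcongr
          exact pow_le_pow_of_le_one hrm0.le hrm1.le ((hN w hwF).trans (by omega)))
        (fun x hx => lt_of_le_of_lt hεδ (hw x hx))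
      refine this.trans ?_
      rw [pow_succ, mul_comm]
      gcongr
      exact hc w hwF
  set α := Real.log c / Real.log θ with hα
  have hlc := Real.log_neg hc0 hc1
  have hlθ := Real.log_neg hθ0 hθ1
  have hα0 : 0 < α := div_pos_of_neg_of_neg hlc hlθ
  have hθα : θ ^ α = c := by
    rw [Real.rpow_def_of_pos hθ0, hα, mul_div_cancel₀ _ hlθ.ne, Real.exp_log hc0]
  have hcinv : 1 ≤ c⁻¹ := (one_le_inv₀ hc0).mpr hc1.le
  refine ⟨c⁻¹ * (δ ^ α)⁻¹, α, by positivity, hα0, ?_⟩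
  intro v t ε hv hε
  have hrw : c⁻¹ * (δ ^ α)⁻¹ * ε ^ α = c⁻¹ * (ε / δ) ^ α := by
    rw [Real.div_rpow hε.le hδ.le]; field_simp
  rw [hrw]
  by_cases h : ε ≤ δ
  · obtain ⟨k, hk1, hk2⟩ := exists_nat_pow_near_of_lt_one (div_pos hε hδ)
      ((div_le_one hδ).mpr h) hθ0 hθ1
    have h1 : ε ≤ δ * θ ^ k := by
      rw [div_le_iff₀ hδ] at hk2; linarith
    have h2 := hind k v t ε hv hε h1
    have h3 : c ^ (k + 1) ≤ (ε / δ) ^ α := by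
      calc c ^ (k + 1) = (θ ^ (k + 1)) ^ α := by
            rw [← hθα, ← Real.rpow_natCast, ← Real.rpow_natCast, ← Real.rpow_mul hθ0.le,
              ← Real.rpow_mul hθ0.le, mul_comm]
        _ ≤ _ := Real.rpow_le_rpow (by positivity) hk1.le hα0.le
    calc _ ≤ c ^ k := h2
      _ = c⁻¹ * c ^ (k + 1) := by rw [pow_succ]; field_simp
      _ ≤ _ := by gcongr
  · push Not at h
    have h1 : 1 ≤ (ε / δ) ^ α := Real.one_le_rpow ((one_le_div hδ).mpr h.le) hα0.le
    have h2 : μ.real (slab v t ε) ≤ 1 := measureReal_le_one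
    nlinarith

lemma stopping (hr : ∀ a, IsSimilarityWith (r a) (φ a)) (hp : ∀ a, 0 < p a)
    (hp1 : ∑ a, p a = 1)
    (hstat : μ = ∑ a, ENNReal.ofReal (p a) • Measure.map (φ a) μ)
    (rm : ℝ) (hrm0 : 0 < rm) (hrm : ∀ a, rm ≤ r a)
    (S : Set (EuclideanSpace ℝ (Fin d))) (hS : MeasurableSet S) (M ρ : ℝ) (hρ0 : 0 < ρ)
    (hρ1 : ρ < 1)
    (h : ∀ w : List A, rm * ρ ≤ (w.map r).prod → (w.map r).prod ≤ ρ →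
      μ.real (listMap φ w ⁻¹' S) ≤ M) : μ.real S ≤ M := by
  have hA : Nonempty A := by
    by_contra h
    rw [not_nonempty_iff] at h
    simp at hp1
  obtain ⟨a₁, ha₁⟩ := Finite.exists_max r
  have key : ∀ (k : ℕ) (w : List A), ρ < (w.map r).prod → (w.map r).prod * r a₁ ^ k ≤ ρ →
      μ.real (listMap φ w ⁻¹' S) ≤ M := by
    intro k
    induction k with
    | zero => intro w h1 h2; simp at h2; linarith
    | succ k ih =>
      intro w h1 h2
      rw [stat_apply hr hp hstat _ ((listMap_continuous hr w).measurable hS)]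
      calc _ ≤ ∑ a, p a * M := by
            apply Finset.sum_le_sum
            intro a _
            apply mul_le_mul_of_nonneg_left _ (hp a).le
            have he : φ a ⁻¹' (listMap φ w ⁻¹' S) = listMap φ (w ++ [a]) ⁻¹' S := by
              ext x
              show _ ∈ S ↔ _ ∈ S
              rw [listMap_append]; rfl
            have hprod : ((w ++ [a]).map r).prod = (w.map r).prod * r a := by simp
            have hwpos := ratio_pos hr w
            rw [he]
            by_cases hlt : ((w ++ [a]).map r).prod ≤ ρ
            · apply h _ _ hlt
              rw [hprod, mul_comm]
              exact mul_le_mul h1.le (hrm a) hrm0.le hwpos.le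
            · push Not at hlt
              apply ih _ hlt
              refine le_trans ?_ h2
              rw [hprod, pow_succ', ← mul_assoc]
              have := (hr a₁).1
              gcongr
              exact ha₁ a
        _ = _ := by rw [← Finset.sum_mul, hp1, one_mul]
  obtain ⟨k, hk⟩ := exists_pow_lt_of_lt_one hρ0 (hr a₁).2.1
  have := key k [] (by simpa using hρ1) (by simpa using hk.le)
  simpa [listMap] using this

end Meas

section Main
variable {d : ℕ} {A : Type*} [Fintype A]
  {φ : A → EuclideanSpace ℝ (Fin d) → EuclideanSpace ℝ (Fin d)} {r : A → ℝ}
  {p : A → ℝ} {μ : Measure (EuclideanSpace ℝ (Fin d))} [IsProbabilityMeasure μ]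

/-- Points close to a rational with denominator in `[N, 2N)`. -/
def levelSet (d : ℕ) (N : ℕ) (ε : ℝ) : Set (EuclideanSpace ℝ (Fin d)) :=
  {x | ∃ pq : (Fin d → ℤ) × ℕ, N ≤ pq.2 ∧ pq.2 < 2 * N ∧
    ∀ i, |x i - (pq.1 i : ℝ) / (pq.2 : ℝ)| ≤ ε}

lemma measurableSet_levelSet (d : ℕ) (N : ℕ) (ε : ℝ) : MeasurableSet (levelSet d N ε) := by
  have : levelSet d N ε = ⋃ pq : (Fin d → ℤ) × ℕ, ⋃ (_ : N ≤ pq.2 ∧ pq.2 < 2 * N), ⋂ i,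
      {x : EuclideanSpace ℝ (Fin d) | |x i - (pq.1 i : ℝ) / (pq.2 : ℝ)| ≤ ε} := by
    ext x
    simp [levelSet, and_assoc]
  rw [this]
  refine MeasurableSet.iUnion fun pq => MeasurableSet.iUnion fun _ => MeasurableSet.iInter fun i => ?_
  apply IsClosed.measurableSet
  apply isClosed_le <;> fun_prop

lemma level_bound (hd : 0 < d) (hr : ∀ a, IsSimilarityWith (r a) (φ a)) (hp : ∀ a, 0 < p a)
    (hp1 : ∑ a, p a = 1)
    (hstat : μ = ∑ a, ENNReal.ofReal (p a) • Measure.map (φ a) μ)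
    (R : ℝ) (hR1 : 1 ≤ R) (hR : μ.real {x | R < ‖x‖} = 0)
    (rm : ℝ) (hrm0 : 0 < rm) (hrm : ∀ a, rm ≤ r a)
    (C α : ℝ) (hC : 0 < C) (hα : 0 < α)
    (hdec : ∀ (v : EuclideanSpace ℝ (Fin d)) (t ε : ℝ), ‖v‖ = 1 → 0 < ε →
      μ.real (slab v t ε) ≤ C * ε ^ α)
    (N : ℕ) (hN : 0 < N) (X κ L : ℝ) (hX0 : 0 < X) (hX1 : X ≤ 1)
    (hX : (N : ℝ) ^ (d + 1) * X ^ d = 1) (hκ0 : 0 < κ) (hκ1 : κ < 1)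
    (hκ : (2 : ℝ) ^ (d + 1) * ((d + 1).factorial : ℝ) * κ ^ d < 1)
    (hL0 : 0 < L) (hL : L ≤ κ / 2) :
    μ.real (levelSet d N (X * L)) ≤ C * (4 * d * R / (rm * κ) * L) ^ α := by
  have hR0 : 0 < R := by linarith
  have hd0 : (0 : ℝ) < d := by exact_mod_cast hd
  have hκX : κ * X < 1 := by nlinarith
  apply stopping hr hp hp1 hstat rm hrm0 hrm _ (measurableSet_levelSet _ _ _) _
    (κ * X / (4 * R)) (by positivity) (by rw [div_lt_one (by positivity)]; linarith)
  intro w hw1 hw2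
  have hwpos := ratio_pos hr w
  set ρ := (w.map r).prod with hρ
  set c := listMap φ w 0 with hc
  obtain ⟨v, t, hv, hvt⟩ := simplex d hd c (κ * X) (2 * N) (by positivity) (by
      calc _ = ((2 : ℝ) ^ (d + 1) * ((d + 1).factorial : ℝ) * κ ^ d) * ((N : ℝ) ^ (d + 1) * X ^ d) := by
            rw [mul_pow, mul_pow]; ring
        _ < 1 := by rw [hX, mul_one]; exact hκ)
    {s | N ≤ s.2 ∧ s.2 < 2 * N ∧ ∀ i, |(s.1 i : ℝ) / (s.2 : ℝ) - c i| ≤ κ * X} (by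
      rintro s ⟨h1, h2, h3⟩
      exact ⟨by omega, by exact_mod_cast h2.le, h3⟩)
  obtain ⟨v', t', hv', h'⟩ := sim_pullback (listMap φ w) ρ hwpos (listMap_norm hr w) v t hv
  have hsub : listMap φ w ⁻¹' levelSet d N (X * L) ⊆
      slab v' t' (4 * d * R / (rm * κ) * L) ∪ {x | R < ‖x‖} := by
    rintro x ⟨pq, hq1, hq2, hpq⟩
    by_cases hx : R < ‖x‖
    · exact Or.inr hx
    left
    push Not at hx
    have hcoord : ∀ (y : EuclideanSpace ℝ (Fin d)) i, |y i| ≤ ‖y‖ := fun y i => by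
      simpa using PiLp.norm_apply_le y i
    have hclose : ‖listMap φ w x - c‖ ≤ κ * X / 4 := by
      rw [hc, listMap_norm hr, sub_zero]
      calc ρ * ‖x‖ ≤ κ * X / (4 * R) * R := by gcongr
        _ = _ := by field_simp
    have hmem : ∀ i, |(pq.1 i : ℝ) / (pq.2 : ℝ) - c i| ≤ κ * X := by
      intro i
      have h1 := hpq i
      have h2 : |listMap φ w x i - c i| ≤ κ * X / 4 := by
        refine le_trans ?_ hclose
        simpa using hcoord (listMap φ w x - c) i
      rw [abs_sub_comm] at h1
      have h3 := abs_sub_le ((pq.1 i : ℝ) / (pq.2 : ℝ)) (listMap φ w x i) (c i)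
      have h4 : X * L ≤ κ * X / 2 := by nlinarith
      have h5 : 0 < κ * X := by positivity
      linarith
    have ht := hvt pq ⟨hq1, hq2, hmem⟩
    have h1 : |inner ℝ v (listMap φ w x) - t| ≤ d * (X * L) := by
      rw [← ht, PiLp.inner_apply, ← Finset.sum_sub_distrib]
      refine (Finset.abs_sum_le_sum_abs _ _).trans ?_
      calc _ ≤ ∑ _i : Fin d, X * L := by
            apply Finset.sum_le_sum
            intro i _
            have e : inner ℝ (v i) (listMap φ w x i) - v i * ((pq.1 i : ℝ) / (pq.2 : ℝ))
              = v i * (listMap φ w x i - (pq.1 i : ℝ) / (pq.2 : ℝ)) := by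
                simp [mul_sub, mul_comm]
            rw [e, abs_mul]
            have h2 : |v i| ≤ 1 := hv ▸ hcoord v i
            calc _ ≤ 1 * (X * L) := by gcongr; exact hpq i
              _ = _ := one_mul _
        _ = _ := by simp
    rw [h' x, abs_mul, abs_of_pos hwpos] at h1
    show |inner ℝ v' x - t'| ≤ _
    have h2 : rm * (κ * X / (4 * R)) * |inner ℝ v' x - t'| ≤ d * (X * L) :=
      (mul_le_mul_of_nonneg_right hw1 (abs_nonneg _)).trans h1
    have h3 : 4 * d * R / (rm * κ) * L = d * (X * L) / (rm * (κ * X / (4 * R))) := by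
      field_simp
    rw [h3, le_div_iff₀ (by positivity)]
    linarith
  calc _ ≤ μ.real (slab v' t' (4 * d * R / (rm * κ) * L) ∪ {x | R < ‖x‖}) :=
        measureReal_mono hsub (measure_ne_top _ _)
    _ ≤ μ.real (slab v' t' (4 * d * R / (rm * κ) * L)) + μ.real {x | R < ‖x‖} :=
        measureReal_union_le _ _
    _ ≤ _ := by
        rw [hR, add_zero]
        exact hdec _ _ _ hv' (by positivity)

lemma frequently_level (β : ℝ) (hβ : 0 < β) (s : ℝ) (hs : 0 < s)
    (x : EuclideanSpace ℝ (Fin d))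
    (hx : {pq : (Fin d → ℤ) × ℕ | 2 ≤ pq.2 ∧
            ∀ i, |x i - (pq.1 i : ℝ) / (pq.2 : ℝ)| ≤
              (pq.2 : ℝ) ^ (-s) * Real.log pq.2 ^ (-β)}.Infinite) (n₀ : ℕ) :
    ∃ n, n₀ ≤ n ∧ x ∈ levelSet d (2 ^ n)
      (((2 ^ n : ℕ) : ℝ) ^ (-s) * ((n : ℝ) * Real.log 2) ^ (-β)) := by
  by_contra! hcon
  apply hx
  have hfin : ∀ (q : ℕ) (c : ℝ), 0 < q →
      {m : Fin d → ℤ | ∀ i, |x i - (m i : ℝ) / (q : ℝ)| ≤ c}.Finite := by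
    intro q c hq
    have hq' : (0 : ℝ) < q := by exact_mod_cast hq
    apply Set.Finite.subset (Set.Finite.pi' (t := fun i => Set.Icc ⌈q * (x i - c)⌉ ⌊q * (x i + c)⌋)
      (fun i => Set.finite_Icc _ _))
    intro m hm i
    have h1 := abs_le.mp (hm i)
    have h2 : (m i : ℝ) = q * ((m i : ℝ) / q) := by field_simp
    constructor
    · rw [Int.ceil_le, h2]; gcongr; linarith
    · rw [Int.le_floor, h2]; gcongr; linarith
  have hU : (⋃ q ∈ (Set.Ico 2 (2 ^ (n₀ + 1)) : Set ℕ), (fun m : Fin d → ℤ => (m, q)) ''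
      {m : Fin d → ℤ | ∀ i, |x i - (m i : ℝ) / (q : ℝ)| ≤
        (q : ℝ) ^ (-s) * Real.log q ^ (-β)}).Finite := by
    apply Set.Finite.biUnion (Set.finite_Ico _ _)
    intro q hq
    exact (hfin q _ (by have := hq.1; omega)).image _
  apply hU.subset
  rintro ⟨m, q⟩ ⟨hq2, hm⟩
  simp only at hq2 hm
  by_cases hq : q < 2 ^ (n₀ + 1)
  · exact Set.mem_biUnion (show q ∈ Set.Ico 2 (2 ^ (n₀ + 1)) from ⟨hq2, hq⟩) ⟨m, hm, rfl⟩
  exfalso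
  push Not at hq
  set n := Nat.log 2 q with hn
  have hq0 : q ≠ 0 := by omega
  have h1 : 2 ^ n ≤ q := Nat.pow_log_le_self 2 hq0
  have h2 : q < 2 ^ (n + 1) := Nat.lt_pow_succ_log_self (by norm_num) q
  have h3 : n₀ + 1 ≤ n := Nat.le_log_of_pow_le (by norm_num) hq
  apply hcon n (by omega)
  refine ⟨(m, q), h1, by rw [pow_succ] at h2; simpa [mul_comm] using h2, fun i => (hm i).trans ?_⟩
  have h1' : ((2 ^ n : ℕ) : ℝ) ≤ q := by exact_mod_cast h1
  have hpos : (0 : ℝ) < ((2 ^ n : ℕ) : ℝ) := by positivity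
  have hlog2 : 0 < Real.log 2 := Real.log_pos (by norm_num)
  have hn0 : (0 : ℝ) < n := by
    have : 0 < n := by omega
    exact_mod_cast this
  have hlog : (n : ℝ) * Real.log 2 ≤ Real.log q := by
    rw [← Real.log_pow]
    apply Real.log_le_log (by positivity)
    exact_mod_cast h1
  apply mul_le_mul
  · exact Real.rpow_le_rpow_of_nonpos hpos h1' (by linarith)
  · exact Real.rpow_le_rpow_of_nonpos (by positivity) hlog (by linarith)
  · exact Real.rpow_nonneg (Real.log_natCast_nonneg q) _
  · positivity

end Main

/-- Log-refined Diophantine statement for affinely irreducible self-similar measures. -/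
theorem self_similar_log_null
    (d : ℕ) (hd : 0 < d) {A : Type*} [Fintype A]
    (φ : A → EuclideanSpace ℝ (Fin d) → EuclideanSpace ℝ (Fin d))
    (hΦ : IsSelfSimilarIFS φ) (hirr : AffinelyIrreducible φ)
    (p : A → ℝ) (hp : ∀ a, 0 < p a) (hp1 : ∑ a, p a = 1)
    (μ : Measure (EuclideanSpace ℝ (Fin d))) [IsProbabilityMeasure μ]
    (hstat : μ = ∑ a, ENNReal.ofReal (p a) • Measure.map (φ a) μ) :
    ∃ α : ℝ, 0 < α ∧ ∀ β : ℝ, α < β →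
      μ {x : EuclideanSpace ℝ (Fin d) |
          {pq : (Fin d → ℤ) × ℕ | 2 ≤ pq.2 ∧
            ∀ i, |x i - (pq.1 i : ℝ) / (pq.2 : ℝ)| ≤
              (pq.2 : ℝ) ^ (-(((d : ℝ) + 1) / d)) * Real.log pq.2 ^ (-β)}.Infinite} = 0 := by
  obtain ⟨-, hsim, a₀, -, z, -, hz, -, -⟩ := hΦ
  choose r hr using hsim
  obtain ⟨R, hzR, hR1, hRinv, hRμ⟩ := exists_radius hr hp hp1 hstat ‖z‖
  obtain ⟨F, δ, hδ, hF⟩ := exists_words hr hirr R hR1 a₀ z hz hzR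
  have hA : Nonempty A := ⟨a₀⟩
  obtain ⟨a₁, ha₁⟩ := Finite.exists_min r
  obtain ⟨C, α₀, hC, hα₀, hdec⟩ := decay hr hp hp1 hstat R hRμ (r a₁) (hr a₁).1 (hr a₁).2.1 ha₁
    F δ hδ hF
  refine ⟨1 / α₀, by positivity, fun β hβ => ?_⟩
  have hβ0 : 0 < β := lt_trans (by positivity) hβ
  have hβα : 1 < β * α₀ := by rwa [div_lt_iff₀ hα₀] at hβ
  have hd0 : (0 : ℝ) < d := by exact_mod_cast hd
  set s : ℝ := ((d : ℝ) + 1) / d with hs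
  have hs0 : 0 < s := by positivity
  have hlog2 : 0 < Real.log 2 := Real.log_pos (by norm_num)
  obtain ⟨κ, hκ0, hκ1, hκ⟩ : ∃ κ : ℝ, 0 < κ ∧ κ < 1 ∧
      (2 : ℝ) ^ (d + 1) * ((d + 1).factorial : ℝ) * κ ^ d < 1 := by
    set B : ℝ := (2 : ℝ) ^ (d + 1) * ((d + 1).factorial : ℝ) with hB
    have hB0 : 0 < B := by positivity
    have hlt : 1 / (B + 1) < 1 := by rw [div_lt_one (by positivity)]; linarith
    refine ⟨1 / (B + 1), by positivity, hlt, ?_⟩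
    have h1 : (1 / (B + 1)) ^ d ≤ 1 / (B + 1) := by
      simpa using pow_le_pow_of_le_one (by positivity) hlt.le hd
    calc B * (1 / (B + 1)) ^ d ≤ B * (1 / (B + 1)) := by gcongr
      _ < 1 := by rw [mul_one_div, div_lt_one (by positivity)]; linarith
  set L : ℕ → ℝ := fun n => ((n : ℝ) * Real.log 2) ^ (-β) with hL
  have hLlim : Tendsto L atTop (𝓝 0) :=
    (tendsto_rpow_neg_atTop hβ0).comp
      (tendsto_natCast_atTop_atTop.atTop_mul_const hlog2)
  obtain ⟨n₁, hn₁⟩ := eventually_atTop.mp (hLlim.eventually_le_const (half_pos hκ0))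
  set n₀ := n₁ + 1 with hn₀
  set K : ℝ := 4 * d * R / (r a₁ * κ) with hK
  have hK0 : 0 < K := by
    have := (hr a₁).1
    positivity
  set f : ℕ → ℝ := fun n => C * (K * L n) ^ α₀ with hf
  set S : ℕ → Set (EuclideanSpace ℝ (Fin d)) := fun n =>
    levelSet d (2 ^ n) (((2 ^ n : ℕ) : ℝ) ^ (-s) * L n) with hS
  have hbound : ∀ n, n₀ ≤ n → μ.real (S n) ≤ f n := by
    intro n hn
    have hn0 : (0 : ℝ) < n := by
      have : 0 < n := by omega
      exact_mod_cast this
    have hN0 : (0 : ℝ) < ((2 ^ n : ℕ) : ℝ) := by positivity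
    apply level_bound hd hr hp hp1 hstat R hR1 hRμ (r a₁) (hr a₁).1 ha₁ C α₀ hC hα₀ hdec
      (2 ^ n) (by positivity) (((2 ^ n : ℕ) : ℝ) ^ (-s)) κ (L n) (by positivity)
      _ _ hκ0 hκ1 hκ (by simp only [hL]; positivity) (hn₁ n (by omega))
    · apply Real.rpow_le_one_of_one_le_of_nonpos _ (by linarith)
      exact_mod_cast Nat.one_le_two_pow
    · rw [← Real.rpow_natCast, ← Real.rpow_natCast, ← Real.rpow_mul hN0.le, ← Real.rpow_add hN0]
      have : ((d + 1 : ℕ) : ℝ) + -s * (d : ℝ) = 0 := by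
        rw [hs]; push_cast; field_simp; ring
      rw [this, Real.rpow_zero]
  have hsum : Summable f := by
    have h1 : ∀ n, f n = C * K ^ α₀ * (Real.log 2) ^ (-(β * α₀)) * (n : ℝ) ^ (-(β * α₀)) := by
      intro n
      simp only [hf, hL]
      rw [Real.mul_rpow hK0.le (by positivity), ← Real.rpow_mul (by positivity),
        Real.mul_rpow (by positivity) hlog2.le, neg_mul]
      ring
    rw [summable_congr h1]
    exact (Real.summable_nat_rpow.mpr (by linarith)).mul_left _
  have hsum' : Summable (fun n => f (n + n₀)) := (summable_nat_add_iff n₀).mpr hsum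
  have htop : ∑' n, μ (S (n + n₀)) ≠ ⊤ := by
    apply ne_top_of_le_ne_top hsum'.tsum_ofReal_ne_top
    apply ENNReal.tsum_le_tsum
    intro n
    rw [← ofReal_measureReal (measure_ne_top _ _)]
    exact ENNReal.ofReal_le_ofReal (hbound _ (by omega))
  refine measure_mono_null ?_ (measure_setOfPred_frequently_eq_zero (p := fun n x => x ∈ S (n + n₀)) htop)
  intro x hx
  show ∃ᶠ n in atTop, x ∈ S (n + n₀)
  rw [frequently_atTop]
  intro N
  obtain ⟨n, hn, hxn⟩ := frequently_level β hβ0 s hs0 x hx (N + n₀)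
  refine ⟨n - n₀, by omega, ?_⟩
  rw [Nat.sub_add_cancel (by omega)]
  exact hxn
end
end

section
/- Let {φ_a}_{a∈A} be a finite family of contractions of ℝ^d (#A ≥ 2), let (p_a)_{a∈A} be a probability vector with p_a > 0 and ∑_a p_a = 1, and let μ be the associated stationary measure, i.e. the unique Borel probability measure with μ = ∑_{a∈A} p_a (φ_a)_*μ. Let A_1, …, A_k be nonempty subsets of A with A_1 ∪ ⋯ ∪ A_k = A, set I = {1,…,k} and Ω = I^ℕ, and for a ∈ A write n(a) = #{j ∈ I : a ∈ A_j}. Define a probability vector (q_i)_{i∈I} by q_i = ∑_{a∈A_i} p_a / n(a), and for each i ∈ I a probability measure ν_i on A by ν_i({a}) = p_a/(q_i · n(a)) for a ∈ A_i and ν_i({a}) = 0 for a ∉ A_i. Let ℙ be the infinite product measure on Ω = I^ℕ with each factor (q_i)_{i∈I}, and for ω = (i_n)_{n≥1} ∈ Ω let m_ω be the infinite product measure on A^ℕ whose n-th factor is ν_{i_n}. Let Π : A^ℕ → ℝ^d be the coding map. Then for every Borel set E ⊆ ℝ^d, μ(E) = ∫_Ω m_ω(Π^{−1}(E)) dℙ(ω).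 -/
noncomputable section
open MeasureTheory Metric Filter Topology

variable {E : Type*} [NormedAddCommGroup E] [NormedSpace ℝ E]

/-- The cylinder sets. -/
def cylSets (A : Type*) : Set (Set (ℕ → A)) :=
  {s | ∃ (N : ℕ) (w : Fin N → A), s = {a | ∀ j : Fin N, a j = w j}}

lemma cylSets_pi (A : Type*) : IsPiSystem (cylSets A) := by
  rintro s ⟨N, w, rfl⟩ t ⟨M, v, rfl⟩ ⟨b, hb1, hb2⟩
  rcases le_total N M with h | h
  · refine ⟨M, v, ?_⟩
    ext a
    simp only [Set.mem_inter_iff, Set.mem_ofPred_eq] at *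
    refine ⟨fun x => x.2, fun x => ⟨fun j => ?_, x⟩⟩
    rw [← hb1 j]
    have h1 := x ⟨j, j.2.trans_le h⟩
    have h2 := hb2 ⟨j, j.2.trans_le h⟩
    exact h1.trans h2.symm
  · refine ⟨N, w, ?_⟩
    ext a
    simp only [Set.mem_inter_iff, Set.mem_ofPred_eq] at *
    refine ⟨fun x => x.1, fun x => ⟨x, fun j => ?_⟩⟩
    rw [← hb2 j]
    have h1 := x ⟨j, j.2.trans_le h⟩
    have h2 := hb1 ⟨j, j.2.trans_le h⟩
    exact h1.trans h2.symm

lemma cyl_meas {A : Type*} [MeasurableSpace A] [MeasurableSingletonClass A] (N : ℕ)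
    (w : Fin N → A) : MeasurableSet {a : ℕ → A | ∀ j : Fin N, a j = w j} := by
  have : {a : ℕ → A | ∀ j : Fin N, a j = w j} =
      ⋂ j : Fin N, (fun a : ℕ → A => a j) ⁻¹' {w j} := by
    ext a
    simp
  rw [this]
  exact MeasurableSet.iInter fun j =>
    (measurable_pi_apply (X := fun _ : ℕ => A) (j : ℕ)) (measurableSet_singleton (w j))

lemma cylSets_gen (A : Type*) [Fintype A] [MeasurableSpace A] [MeasurableSingletonClass A] :
    (MeasurableSpace.pi : MeasurableSpace (ℕ → A)) = MeasurableSpace.generateFrom (cylSets A) := by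
  apply le_antisymm
  · refine iSup_le fun n => ?_
    rintro _ ⟨s, hs, rfl⟩
    have : (fun b : ℕ → A => b n) ⁻¹' s =
        ⋃ w ∈ {w : Fin (n+1) → A | w (Fin.last n) ∈ s},
          {a : ℕ → A | ∀ j : Fin (n+1), a j = w j} := by
      ext a
      simp only [Set.mem_preimage, Set.mem_iUnion, Set.mem_ofPred_eq, exists_prop]
      constructor
      · intro h
        exact ⟨fun j => a j, h, fun j => rfl⟩
      · rintro ⟨w, h, h2⟩
        have := h2 (Fin.last n)
        simp only [Fin.val_last] at this
        rwa [this]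
    rw [this]
    refine MeasurableSet.biUnion (Set.to_countable _) fun w _ => ?_
    exact MeasurableSpace.measurableSet_generateFrom ⟨_, w, rfl⟩
  · refine MeasurableSpace.generateFrom_le ?_
    rintro _ ⟨N, w, rfl⟩
    exact cyl_meas N w

/-- Prepend a letter. -/
def consSeq {A : Type*} (b : A) (a : ℕ → A) : ℕ → A
  | 0 => b
  | n + 1 => a n

lemma consSeq_meas {A : Type*} [MeasurableSpace A] (b : A) : Measurable (consSeq b) := by
  refine measurable_pi_lambda _ fun n => ?_
  cases n with
  | zero => exact measurable_const
  | succ n => exact measurable_pi_apply n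

/-- Self-similarity of a Bernoulli measure. -/
lemma bernoulli_decomp {A : Type*} [Fintype A] [DecidableEq A] [MeasurableSpace A]
    [MeasurableSingletonClass A] (P : A → ENNReal) (hP : ∑ a, P a = 1)
    (M : Measure (ℕ → A)) [IsProbabilityMeasure M]
    (hM : ∀ (N : ℕ) (w : Fin N → A), M {a | ∀ j : Fin N, a j = w j} = ∏ j, P (w j)) :
    M = ∑ b, P b • Measure.map (consSeq b) M := by
  refine ext_of_generate_finite _ (cylSets_gen A) (cylSets_pi A) ?_ ?_
  · rintro _ ⟨N, w, rfl⟩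
    rw [hM, Measure.finsetSum_apply]
    simp only [Measure.smul_apply, smul_eq_mul,
      Measure.map_apply (consSeq_meas _) (cyl_meas N w)]
    cases N with
    | zero => simp [hP]
    | succ N =>
      have : ∀ b, M (consSeq b ⁻¹' {a | ∀ j : Fin (N+1), a j = w j}) =
          if b = w 0 then ∏ j : Fin N, P (w j.succ) else 0 := by
        intro b
        split_ifs with h
        · rw [← hM]
          congr 1
          ext a
          simp [Fin.forall_fin_succ, consSeq, h]
        · convert measure_empty (μ := M)
          ext a
          simp [Fin.forall_fin_succ, consSeq, h]
      simp only [this]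
      simp [Fin.prod_univ_succ]
  · rw [Measure.finsetSum_apply]
    simp only [Measure.smul_apply, smul_eq_mul,
      Measure.map_apply (consSeq_meas _) MeasurableSet.univ]
    simp [hP]

lemma wordMap_meas {A X : Type*} [Fintype A] [MeasurableSpace A]
    [MeasurableSingletonClass A] [NormedAddCommGroup X] [NormedSpace ℝ X] [MeasurableSpace X]
    (φ : A → X → X) (hφ : ∀ a, Measurable (φ a)) (n : ℕ) :
    Measurable (fun z : (ℕ → A) × X => wordMap φ n z.1 z.2) := by
  have hu : Measurable (fun z : A × X => φ z.1 z.2) :=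
    measurable_from_prod_countable_right hφ
  induction n with
  | zero => exact measurable_snd
  | succ n ih =>
    have h1 : Measurable (fun z : (ℕ → A) × X => ((fun k => z.1 (k+1) : ℕ → A), z.2)) := by
      fun_prop
    have h2 : Measurable (fun z : (ℕ → A) × X => z.1 0) := by fun_prop
    exact hu.comp (h2.prodMk (ih.comp h1))

lemma stat_lintegral {A X : Type*} [Fintype A] [DecidableEq A] [MeasurableSpace A]
    [MeasurableSingletonClass A] [NormedAddCommGroup X] [NormedSpace ℝ X] [MeasurableSpace X]
    (φ : A → X → X) (hφ : ∀ a, Measurable (φ a)) (P : A → ENNReal)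
    (M : Measure (ℕ → A)) [IsProbabilityMeasure M]
    (hM : M = ∑ b, P b • Measure.map (consSeq b) M)
    (μ : Measure X) [IsProbabilityMeasure μ]
    (hμ : μ = ∑ b, P b • Measure.map (φ b) μ) (n : ℕ) :
    ∀ g : X → ENNReal, Measurable g →
      ∫⁻ a, ∫⁻ x, g (wordMap φ n a x) ∂μ ∂M = ∫⁻ x, g x ∂μ := by
  induction n with
  | zero => intro g hg; simp [wordMap]
  | succ n ih =>
    intro g hg
    have hmeas : Measurable fun a => ∫⁻ x, g (wordMap φ (n+1) a x) ∂μ :=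
      (hg.comp (wordMap_meas φ hφ (n+1))).lintegral_prod_right'
    conv_lhs => rw [hM]
    conv_rhs => rw [hμ]
    rw [lintegral_finsetSum_measure, lintegral_finsetSum_measure]
    refine Finset.sum_congr rfl fun b _ => ?_
    rw [lintegral_smul_measure, lintegral_smul_measure, lintegral_map hmeas (consSeq_meas b),
      lintegral_map hg (hφ b), ← ih (fun x => g (φ b x)) (hg.comp (hφ b))]
    rfl

lemma coding_map_eq {A X : Type*} [Fintype A] [DecidableEq A] [MeasurableSpace A]
    [MeasurableSingletonClass A] [NormedAddCommGroup X] [NormedSpace ℝ X] [MeasurableSpace X]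
    [BorelSpace X]
    (φ : A → X → X) (hφ : ∀ a, Measurable (φ a)) (P : A → ENNReal)
    (M : Measure (ℕ → A)) [IsProbabilityMeasure M]
    (hM : M = ∑ b, P b • Measure.map (consSeq b) M)
    (μ : Measure X) [IsProbabilityMeasure μ]
    (hμ : μ = ∑ b, P b • Measure.map (φ b) μ)
    (c : (ℕ → A) → X)
    (hc : ∀ (a : ℕ → A) (x₀ : X),
      Filter.Tendsto (fun n => wordMap φ n a x₀) Filter.atTop (nhds (c a))) :
    Measurable c ∧ μ = Measure.map c M := by
  have hcm : Measurable c := by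
    refine measurable_of_tendsto_metrizable (f := fun n a => wordMap φ n a 0) (fun n => ?_)
      (tendsto_pi_nhds.2 fun a => hc a 0)
    exact (wordMap_meas φ hφ n).comp (measurable_id.prodMk measurable_const)
  refine ⟨hcm, ?_⟩
  have : IsProbabilityMeasure (Measure.map c M) := Measure.isProbabilityMeasure_map hcm.aemeasurable
  refine ext_of_forall_lintegral_eq_of_IsFiniteMeasure fun f => ?_
  have hf : Measurable (fun x => (f x : ENNReal)) := f.continuous.measurable.coe_nnreal_ennreal
  rw [lintegral_map hf hcm]
  have key : ∀ n, ∫⁻ z, (f (wordMap φ n z.1 z.2) : ENNReal) ∂(M.prod μ) = ∫⁻ x, f x ∂μ := by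
    intro n
    refine (lintegral_prod _ (hf.comp (wordMap_meas φ hφ n)).aemeasurable).trans ?_
    exact stat_lintegral φ hφ P M hM μ hμ n _ hf
  have lim : Tendsto (fun n => ∫⁻ z, (f (wordMap φ n z.1 z.2) : ENNReal) ∂(M.prod μ)) atTop
      (𝓝 (∫⁻ z, (f (c z.1) : ENNReal) ∂(M.prod μ))) := by
    refine tendsto_lintegral_of_dominated_convergence (fun _ => (nndist f 0 : ENNReal))
      (fun n => hf.comp (wordMap_meas φ hφ n)) (fun n => ae_of_all _ fun z => ?_) ?_
      (ae_of_all _ fun z => ?_)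
    · exact ENNReal.coe_le_coe.2 (BoundedContinuousFunction.NNReal.upper_bound f _)
    · simp
    · exact ENNReal.tendsto_coe.2 ((f.continuous.tendsto _).comp (hc z.1 z.2))
  simp only [key] at lim
  have := tendsto_nhds_unique tendsto_const_nhds lim
  rw [this]
  refine (lintegral_prod _ ((hf.comp hcm).comp measurable_fst).aemeasurable).trans ?_
  simp

/-- Proposition (disintegration of stationary measures). Infinite product measures
are characterized by their values on cylinder sets. -/
theorem stationary_disintegration
    (d : ℕ) {A : Type*} [Fintype A] [DecidableEq A] [MeasurableSpace A] [MeasurableSingletonClass A]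
    (φ : A → EuclideanSpace ℝ (Fin d) → EuclideanSpace ℝ (Fin d))
    (hφ : ∀ a, ∃ r, IsContractionWith r (φ a))
    (hA : 2 ≤ Fintype.card A)
    (p : A → ℝ) (hp : ∀ a, 0 < p a) (hp1 : ∑ a, p a = 1)
    (μ : Measure (EuclideanSpace ℝ (Fin d))) [IsProbabilityMeasure μ]
    (hstat : μ = ∑ a, ENNReal.ofReal (p a) • Measure.map (φ a) μ)
    (k : ℕ) (hk : 0 < k)
    (𝒜 : Fin k → Finset A) (h𝒜ne : ∀ i, (𝒜 i).Nonempty) (h𝒜cov : ∀ a, ∃ i, a ∈ 𝒜 i)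
    (q : Fin k → ℝ)
    (hq : ∀ i, q i = ∑ a ∈ 𝒜 i,
      p a / ((Finset.univ.filter fun j : Fin k => a ∈ 𝒜 j).card : ℝ))
    (ν : Fin k → Measure A) [∀ i, IsProbabilityMeasure (ν i)]
    (hν : ∀ i a, ν i {a} = if a ∈ 𝒜 i then
      ENNReal.ofReal (p a / (q i * ((Finset.univ.filter fun j : Fin k => a ∈ 𝒜 j).card : ℝ)))
      else 0)
    -- ℙ is the infinite product measure on Ω = I^ℕ with each factor (q_i)_{i∈I},
    -- characterized by its values on cylinder sets:
    (ℙ : Measure (ℕ → Fin k)) [IsProbabilityMeasure ℙ]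
    (hℙ : ∀ (N : ℕ) (v : Fin N → Fin k),
      ℙ {ω | ∀ j : Fin N, ω j = v j} = ∏ j, ENNReal.ofReal (q (v j)))
    -- m ω is the infinite product measure on A^ℕ whose n-th factor is ν (ω n):
    (m : (ℕ → Fin k) → Measure (ℕ → A)) (hmprob : ∀ ω, IsProbabilityMeasure (m ω))
    (hm : ∀ (ω : ℕ → Fin k) (N : ℕ) (w : Fin N → A),
      m ω {a | ∀ j : Fin N, a j = w j} = ∏ j : Fin N, ν (ω j) {w j})
    -- the coding map:
    (codingMap : (ℕ → A) → EuclideanSpace ℝ (Fin d))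
    (hcodingMap : ∀ (a : ℕ → A) (x₀ : EuclideanSpace ℝ (Fin d)),
      Filter.Tendsto (fun n => wordMap φ n a x₀) Filter.atTop (nhds (codingMap a))) :
    ∀ S : Set (EuclideanSpace ℝ (Fin d)), MeasurableSet S →
      μ S = ∫⁻ ω, m ω (codingMap ⁻¹' S) ∂ℙ := by
  have hφm : ∀ a, Measurable (φ a) := by
    intro a
    obtain ⟨r, h0, h1, h⟩ := hφ a
    have : LipschitzWith r.toNNReal (φ a) := by
      refine LipschitzWith.of_dist_le_mul fun x y => ?_
      rw [dist_eq_norm, dist_eq_norm, Real.coe_toNNReal _ h0.le]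
      exact h x y
    exact this.continuous.measurable
  have hcard : ∀ a, 0 < ((Finset.univ.filter fun j : Fin k => a ∈ 𝒜 j).card : ℝ) := by
    intro a
    obtain ⟨i, hi⟩ := h𝒜cov a
    exact_mod_cast Finset.card_pos.2 ⟨i, by simp [hi]⟩
  have hqpos : ∀ i, 0 < q i := by
    intro i
    rw [hq]
    exact Finset.sum_pos (fun a _ => div_pos (hp a) (hcard a)) (h𝒜ne i)
  have hmix : ∀ a, ∑ i, ENNReal.ofReal (q i) * ν i {a} = ENNReal.ofReal (p a) := by
    intro a
    have : ∀ i, ENNReal.ofReal (q i) * ν i {a} = if a ∈ 𝒜 i then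
        ENNReal.ofReal (p a / ((Finset.univ.filter fun j : Fin k => a ∈ 𝒜 j).card : ℝ)) else 0 := by
      intro i
      rw [hν]
      split_ifs
      · rw [← ENNReal.ofReal_mul (hqpos i).le]
        congr 1
        have := (hqpos i).ne'
        have := (hcard a).ne'
        field_simp
      · simp
    simp only [this]
    rw [← Finset.sum_filter, Finset.sum_const, nsmul_eq_mul, ← ENNReal.ofReal_natCast,
      ← ENNReal.ofReal_mul (hcard a).le]
    congr 1
    have := (hcard a).ne'
    field_simp
  have hP : ∑ a, ENNReal.ofReal (p a) = 1 := by
    rw [← ENNReal.ofReal_sum_of_nonneg fun a _ => (hp a).le, hp1, ENNReal.ofReal_one]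
  have hmm : Measurable m := by
    refine Measurable.measure_of_isPiSystem_of_isProbabilityMeasure (cylSets_gen A)
      (cylSets_pi A) ?_
    rintro _ ⟨N, w, rfl⟩
    simp only [hm]
    refine Finset.measurable_prod _ fun j _ => ?_
    exact (measurable_of_countable (fun i : Fin k => ν i {w j})).comp (measurable_pi_apply (j : ℕ))
  have hMapp : ∀ s, MeasurableSet s → ℙ.bind m s = ∫⁻ ω, m ω s ∂ℙ :=
    fun s hs => Measure.bind_apply hs hmm.aemeasurable
  have : IsProbabilityMeasure (ℙ.bind m) := ⟨by rw [hMapp _ MeasurableSet.univ]; simp⟩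
  have hcyl : ∀ (N : ℕ) (w : Fin N → A),
      ℙ.bind m {a | ∀ j : Fin N, a j = w j} = ∏ j, ENNReal.ofReal (p (w j)) := by
    intro N w
    rw [hMapp _ (cyl_meas N w)]
    simp only [hm]
    have hr : Measurable (fun (ω : ℕ → Fin k) (j : Fin N) => ω j) := by fun_prop
    have h1 := lintegral_map (μ := ℙ) (f := fun v : Fin N → Fin k => ∏ j, ν (v j) {w j})
      (measurable_of_countable _) hr
    rw [← h1, lintegral_fintype]
    simp only [← hmix]
    rw [Finset.prod_univ_sum, Fintype.piFinset_univ]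
    refine Finset.sum_congr rfl fun v _ => ?_
    rw [Measure.map_apply hr (measurableSet_singleton v), Finset.prod_mul_distrib, ← hℙ N v,
      mul_comm]
    congr 2
    ext ω
    simp [funext_iff]
  obtain ⟨hc, h⟩ := coding_map_eq φ hφm (fun a => ENNReal.ofReal (p a)) (ℙ.bind m)
    (bernoulli_decomp _ hP _ hcyl) μ hstat codingMap hcodingMap
  intro S hS
  rw [h, Measure.map_apply hc hS, hMapp _ (hc hS)]
end
end
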